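/- Let n ≥ 0 and m ≥ 1 be integers with n+m ≥ 2, let 1 < p ≤ q < ∞, and let α, β ∈ ℝ satisfy α + β ≥ 0, α < m/p', β < m/q and 1/q = 1/p + (α+β−1)/(n+m). Then there exists a constant S > 0 such that for every smooth compactly supported function u : ℝ^{n+m} → ℝ, (∫_{ℝ^{n+m}} |x̂|^{−βq} |u(x,x̂)|^q dx dx̂)^{1/q} ≤ S · (∫_{ℝ^{n+m}} |x̂|^{αp} |∇u(x,x̂)|^p dx dx̂)^{1/p}. -/

import Mathlib

open MeasureTheory ENNReal

noncomputable section

/-- The norm `|x̂|` of the last `m` coordinates of a point of `ℝ^{n+m}`. -/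
def hatNorm (n m : ℕ) (X : EuclideanSpace ℝ (Fin n ⊕ Fin m)) : ℝ :=
  Real.sqrt (∑ j : Fin m, X (Sum.inr j) ^ 2)

abbrev EE (n m : ℕ) := EuclideanSpace ℝ (Fin n ⊕ Fin m)

def hatProj (n m : ℕ) (X : EE n m) : EuclideanSpace ℝ (Fin m) :=
  WithLp.toLp 2 (fun j => X (Sum.inr j))

lemma hatNorm_eq (n m : ℕ) (X : EE n m) : hatNorm n m X = ‖hatProj n m X‖ := by
  simp [hatNorm, hatProj, EuclideanSpace.norm_eq]

lemma hatProj_add (n m : ℕ) (X Y : EE n m) :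
    hatProj n m (X + Y) = hatProj n m X + hatProj n m Y := by
  ext j; simp [hatProj]

lemma hatProj_smul (n m : ℕ) (r : ℝ) (X : EE n m) :
    hatProj n m (r • X) = r • hatProj n m X := by
  ext j; simp [hatProj]

lemma hatNorm_nonneg (n m : ℕ) (X : EE n m) : 0 ≤ hatNorm n m X := Real.sqrt_nonneg _

lemma hatNorm_add_le (n m : ℕ) (X Y : EE n m) :
    hatNorm n m (X + Y) ≤ hatNorm n m X + hatNorm n m Y := by
  simp only [hatNorm_eq, hatProj_add]; exact norm_add_le _ _

lemma hatNorm_smul (n m : ℕ) (r : ℝ) (X : EE n m) :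
    hatNorm n m (r • X) = |r| * hatNorm n m X := by
  simp only [hatNorm_eq, hatProj_smul, norm_smul, Real.norm_eq_abs]

lemma hatNorm_le_norm (n m : ℕ) (X : EE n m) : hatNorm n m X ≤ ‖X‖ := by
  rw [EuclideanSpace.norm_eq, hatNorm]
  apply Real.sqrt_le_sqrt
  rw [Fintype.sum_sum_type]
  simp only [Real.norm_eq_abs, sq_abs]
  have : 0 ≤ ∑ i : Fin n, X (Sum.inl i) ^ 2 := Finset.sum_nonneg fun i _ => sq_nonneg _
  linarith

lemma abs_le_hatNorm (n m : ℕ) (X : EE n m) (j : Fin m) : |X (Sum.inr j)| ≤ hatNorm n m X := by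
  rw [hatNorm_eq]
  have := PiLp.norm_apply_le (hatProj n m X) j
  simpa [hatProj] using this

lemma continuous_hatNorm (n m : ℕ) : Continuous (hatNorm n m) := by
  unfold hatNorm
  fun_prop

lemma measurable_hatNorm (n m : ℕ) : Measurable (hatNorm n m) :=
  (continuous_hatNorm n m).measurable

/-- a unit direction in which `hatNorm` grows linearly. -/
lemma exists_dir (n m : ℕ) (hm : 1 ≤ m) (X : EE n m) :
    ∃ e : EE n m, ‖e‖ = 1 ∧ ∀ t : ℝ, 0 ≤ t → hatNorm n m (X + t • e) = hatNorm n m X + t := by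
  by_cases h0 : hatNorm n m X = 0
  · let e : EE n m := EuclideanSpace.single (Sum.inr ⟨0, hm⟩) 1
    refine ⟨e, by simp [e], fun t ht => ?_⟩
    have hX : hatProj n m X = 0 := by rw [hatNorm_eq] at h0; simpa using h0
    have he : hatProj n m e = EuclideanSpace.single (⟨0, hm⟩ : Fin m) (1:ℝ) := by
      ext j; simp [hatProj, e]
    rw [h0, hatNorm_eq, hatProj_add, hatProj_smul, hX, he, zero_add, norm_smul]
    simp [abs_of_nonneg ht]
  · have hp : 0 < hatNorm n m X := lt_of_le_of_ne (hatNorm_nonneg n m X) (Ne.symm h0)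
    let P : EE n m := WithLp.toLp 2 (Sum.elim 0 (fun j => X (Sum.inr j)))
    have hP : hatProj n m P = hatProj n m X := by ext j; simp [hatProj, P]
    have hPn : ‖P‖ = hatNorm n m X := by
      simp [EuclideanSpace.norm_eq, P, hatNorm]
    refine ⟨(hatNorm n m X)⁻¹ • P, ?_, fun t ht => ?_⟩
    · rw [norm_smul, hPn, norm_inv, Real.norm_of_nonneg hp.le, inv_mul_cancel₀ h0]
    · have : hatProj n m (X + t • (hatNorm n m X)⁻¹ • P) =
        (1 + t * (hatNorm n m X)⁻¹) • hatProj n m X := by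
        rw [hatProj_add, hatProj_smul, hatProj_smul, hP, add_smul, one_smul, smul_smul]
      rw [hatNorm_eq, this, norm_smul, ← hatNorm_eq, Real.norm_of_nonneg (by positivity)]
      field_simp

lemma ae_hatNorm_pos (n m : ℕ) (hm : 1 ≤ m) : ∀ᵐ X : EE n m, 0 < hatNorm n m X := by
  have h1 : ∀ᵐ x : (Fin n ⊕ Fin m → ℝ), x (Sum.inr ⟨0, hm⟩) ≠ 0 := by
    exact Measure.ae_eval_ne _ _ _
  have h2 := (PiLp.volume_preserving_ofLp (Fin n ⊕ Fin m)).quasiMeasurePreserving.ae h1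
  filter_upwards [h2] with X hX
  exact lt_of_lt_of_le (abs_pos.mpr hX) (abs_le_hatNorm n m X _)

lemma integral_abs_rpow (r R : ℝ) (hr : -1 < r) (hR : 0 < R) :
    Integrable ((Set.Icc (-R) R).indicator (fun t : ℝ => |t| ^ r)) ∧
    ∫ t, (Set.Icc (-R) R).indicator (fun t : ℝ => |t| ^ r) t = 2 * (R ^ (r + 1) / (r + 1)) := by
  have key : (Set.Icc (-R) R).indicator (fun t : ℝ => |t| ^ r) =
      fun t => (Set.Iic R).indicator (fun t : ℝ => t ^ r) |t| := by
    ext t; simp [Set.indicator, abs_le]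
  have e2 : Set.Iic R ∩ Set.Ioi 0 = Set.Ioc 0 R := by ext; simp [and_comm]
  have h1 : ∫ t, (Set.Icc (-R) R).indicator (fun t : ℝ => |t| ^ r) t
      = 2 * (R ^ (r + 1) / (r + 1)) := by
    rw [key, integral_comp_abs, integral_indicator measurableSet_Iic,
      Measure.restrict_restrict measurableSet_Iic, e2,
      ← intervalIntegral.integral_of_le hR.le, integral_rpow (Or.inl hr),
      Real.zero_rpow (by linarith)]
    simp
  refine ⟨Integrable.of_integral_ne_zero ?_, h1⟩
  rw [h1]
  have : 0 < r + 1 := by linarith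
  positivity

abbrev wt (n m : ℕ) (s : ℝ) (X : EE n m) : ℝ≥0∞ := ENNReal.ofReal (hatNorm n m X) ^ (-s)

lemma measurable_wt (n m : ℕ) (s : ℝ) : Measurable (wt n m s) :=
  (measurable_hatNorm n m).ennreal_ofReal.pow_const _

abbrev wm (n m : ℕ) (s : ℝ) : Measure (EE n m) := volume.withDensity (wt n m s)

abbrev reg (n m : ℕ) (Y : EE n m) (t : ℝ) : Set (EE n m) :=
  {X | dist X Y < 3 / 2 * t ∧ hatNorm n m X ≤ hatNorm n m Y}

lemma measurableSet_reg (n m : ℕ) (Y : EE n m) (t : ℝ) : MeasurableSet (reg n m Y t) := by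
  apply MeasurableSet.inter
  · exact measurableSet_lt (f := fun X : EE n m => dist X Y) (by fun_prop) measurable_const
  · exact measurableSet_le (measurable_hatNorm n m) measurable_const

lemma rpow_hat (n m : ℕ) (Y : EE n m) (h : 0 < hatNorm n m Y) (r : ℝ) :
    ENNReal.ofReal (hatNorm n m Y) ^ r = ENNReal.ofReal (hatNorm n m Y ^ r) :=
  ENNReal.ofReal_rpow_of_pos h

lemma reg_big (n m : ℕ) (hm : 1 ≤ m) (s : ℝ) (hs0 : 0 ≤ s) (hs : s < m) :
    ∃ C : ℝ, 0 < C ∧ ∀ Y : EE n m, 0 < hatNorm n m Y → ∀ t : ℝ, t ≤ 2 * hatNorm n m Y →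
      wm n m s (reg n m Y t) ≤ ENNReal.ofReal (C * hatNorm n m Y ^ (n + m) * hatNorm n m Y ^ (-s)) := by
  have hm0 : (0:ℝ) < m := by exact_mod_cast hm
  set r : ℝ := -(s / m) with hr
  have hr1 : -1 < r := by
    have : s / m < 1 := by rw [div_lt_one hm0]; exact hs
    linarith
  have hr0 : r ≤ 0 := by rw [hr]; have : 0 ≤ s / m := by positivity
                         linarith
  have hr1' : 0 < r + 1 := by linarith
  refine ⟨6 ^ n * (2 / (r + 1)) ^ m, by positivity, fun Y hY t ht => ?_⟩
  set R := hatNorm n m Y with hR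
  let f : Fin n ⊕ Fin m → ℝ → ℝ := Sum.elim
    (fun i => (Set.Icc (Y (Sum.inl i) - 3 * R) (Y (Sum.inl i) + 3 * R)).indicator (fun _ => 1))
    (fun _ => (Set.Icc (-R) R).indicator (fun t : ℝ => |t| ^ r))
  have hf0 : ∀ i t, 0 ≤ f i t := by
    rintro (i | j) t
    · exact Set.indicator_nonneg (fun _ _ => zero_le_one) _
    · exact Set.indicator_nonneg (f := fun t : ℝ => |t| ^ r) (fun _ _ => by positivity) _
  have hfi : ∀ i, Integrable (f i) := by
    rintro (i | j)
    · exact (integrable_indicator_iff measurableSet_Icc).2 (integrableOn_const (by simp))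
    · exact (integral_abs_rpow r R hr1 hY).1
  have hfint : ∫ x : (Fin n ⊕ Fin m → ℝ), ∏ i, f i (x i) =
      6 ^ n * (2 / (r + 1)) ^ m * R ^ (n + m) * R ^ (-s) := by
    rw [integral_fintype_prod_volume_eq_prod, Fintype.prod_sum_type]
    have h1 : ∀ i : Fin n, ∫ x, f (Sum.inl i) x = 6 * R := by
      intro i
      simp only [f, Sum.elim_inl]
      rw [integral_indicator measurableSet_Icc]
      simp only [integral_const, smul_eq_mul, mul_one, measureReal_restrict_apply_univ]
      rw [Real.volume_real_Icc_of_le (by linarith)]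
      ring
    have h2 : ∀ i : Fin m, ∫ x, f (Sum.inr i) x = 2 * (R ^ (r + 1) / (r + 1)) := by
      intro i
      exact (integral_abs_rpow r R hr1 hY).2
    simp only [h1, h2, Finset.prod_const, Finset.card_univ, Fintype.card_fin]
    have h3 : (R ^ (r + 1)) ^ m = R ^ m * R ^ (-s) := by
      rw [← Real.rpow_natCast, ← Real.rpow_mul hY.le, ← Real.rpow_natCast, ← Real.rpow_add hY]
      congr 1
      rw [hr]; field_simp; ring
    rw [mul_div_assoc', mul_div_right_comm, mul_pow (2 / (r+1)), h3, mul_pow, pow_add]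
    ring
  have hfI : Integrable (fun x : (Fin n ⊕ Fin m → ℝ) => ∏ i, f i (x i)) :=
    Integrable.fintype_prod hfi
  rw [← hfint, ofReal_integral_eq_lintegral_ofReal hfI
    (Filter.Eventually.of_forall fun x => Finset.prod_nonneg fun i _ => hf0 i _),
    ← (PiLp.volume_preserving_ofLp (Fin n ⊕ Fin m)).lintegral_comp_emb
      (MeasurableEquiv.toLp 2 _).symm.measurableEmbedding,
    withDensity_apply _ (measurableSet_reg n m Y t),
    ← lintegral_indicator (measurableSet_reg n m Y t)]
  have h1 : ∀ᵐ X : EE n m, ∀ i, X i ≠ 0 := by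
    rw [ae_all_iff]
    intro i
    have h1 : ∀ᵐ x : (Fin n ⊕ Fin m → ℝ), x i ≠ 0 := Measure.ae_eval_ne _ _ _
    exact (PiLp.volume_preserving_ofLp (Fin n ⊕ Fin m)).quasiMeasurePreserving.ae h1
  apply lintegral_mono_ae
  filter_upwards [h1] with X hX
  by_cases hXr : X ∈ reg n m Y t
  · rw [Set.indicator_of_mem hXr]
    have hj : ∀ j, |X (Sum.inr j)| ≤ hatNorm n m X := abs_le_hatNorm n m X
    have hpos : 0 < hatNorm n m X := lt_of_lt_of_le (abs_pos.2 (hX (Sum.inr ⟨0, hm⟩))) (hj _)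
    rw [wt, rpow_hat n m X hpos]
    apply ENNReal.ofReal_le_ofReal
    rw [Fintype.prod_sum_type]
    have e1 : ∏ i : Fin n, f (Sum.inl i) (X (Sum.inl i)) = 1 := by
      apply Finset.prod_eq_one
      intro i _
      simp only [f, Sum.elim_inl]
      rw [Set.indicator_of_mem]
      have h := PiLp.norm_apply_le (X - Y) (Sum.inl i)
      rw [← dist_eq_norm X Y] at h
      have h' := hXr.1
      simp only [PiLp.sub_apply, Real.norm_eq_abs] at h
      have := abs_le.1 h
      constructor <;> linarith [this.1, this.2]
    have e2 : ∏ i : Fin m, f (Sum.inr i) (X (Sum.inr i)) = ∏ i : Fin m, |X (Sum.inr i)| ^ r := by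
      apply Finset.prod_congr rfl
      intro i _
      simp only [f, Sum.elim_inr]
      rw [Set.indicator_of_mem]
      exact abs_le.1 ((hj i).trans hXr.2)
    rw [e1, e2, one_mul]
    calc hatNorm n m X ^ (-s) = ∏ i : Fin m, hatNorm n m X ^ r := by
          rw [Finset.prod_const, Finset.card_univ, Fintype.card_fin, ← Real.rpow_natCast,
            ← Real.rpow_mul hpos.le]
          congr 1
          rw [hr]; field_simp
      _ ≤ _ := by
          apply Finset.prod_le_prod
          · intro i _; positivity
          · intro i _
            exact Real.rpow_le_rpow_of_nonpos (abs_pos.2 (hX _)) (hj i) hr0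
  · rw [Set.indicator_of_notMem hXr]; exact zero_le

lemma reg_bound (n m : ℕ) (hm : 1 ≤ m) (s : ℝ) (hs : s < m) :
    ∃ C : ℝ, 0 < C ∧ ∀ Y : EE n m, 0 < hatNorm n m Y → ∀ t : ℝ, 0 < t → t ≤ 2 * hatNorm n m Y →
      wm n m s (reg n m Y t) ≤ ENNReal.ofReal (C * t ^ (n + m) * hatNorm n m Y ^ (-s)) := by
  have : Nonempty (Fin n ⊕ Fin m) := ⟨Sum.inr ⟨0, hm⟩⟩
  have : Nontrivial (EE n m) := inferInstance
  set V : ℝ := (volume : Measure (EE n m)).real (Metric.ball 0 1) with hV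
  have hV0 : 0 < V := ENNReal.toReal_pos (Metric.measure_ball_pos _ _ one_pos).ne' measure_ball_lt_top.ne
  -- bound when the weight is controlled
  have key : ∀ (Y : EE n m) (t M : ℝ), 0 < t → 0 ≤ M →
      (∀ X ∈ reg n m Y t, 0 < hatNorm n m X → hatNorm n m X ^ (-s) ≤ M) →
      wm n m s (reg n m Y t) ≤ ENNReal.ofReal (V * (3 / 2) ^ (n + m) * t ^ (n + m) * M) := by
    intro Y t M ht hM h
    rw [withDensity_apply _ (measurableSet_reg n m Y t)]
    calc ∫⁻ X in reg n m Y t, wt n m s X ≤ ∫⁻ X in reg n m Y t, ENNReal.ofReal M := by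
          apply lintegral_mono_ae
          refine (ae_restrict_iff' (measurableSet_reg n m Y t)).2 ?_
          filter_upwards [ae_hatNorm_pos n m hm] with X hX hXr
          rw [wt, rpow_hat n m X hX]
          exact ENNReal.ofReal_le_ofReal (h X hXr hX)
      _ = ENNReal.ofReal M * volume (reg n m Y t) := by simp
      _ ≤ ENNReal.ofReal M * volume (Metric.ball Y (3 / 2 * t)) := by
          gcongr
          intro X hX
          exact hX.1
      _ = _ := by
          rw [Measure.addHaar_ball _ _ (by positivity), ← ENNReal.ofReal_toReal
            (measure_ball_lt_top (μ := (volume : Measure (EE n m))) (x := 0) (r := 1)).ne,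
            ← ENNReal.ofReal_mul (by positivity), ← ENNReal.ofReal_mul hM]
          congr 1
          rw [← measureReal_def, ← hV, finrank_euclideanSpace]
          simp only [Fintype.card_sum, Fintype.card_fin, mul_pow]
          ring
  rcases le_total s 0 with hs0 | hs0
  · refine ⟨V * (3 / 2) ^ (n + m), by positivity, fun Y hY t ht _ => key Y t _ ht (by positivity) ?_⟩
    intro X hX hX0
    exact Real.rpow_le_rpow hX0.le hX.2 (by linarith)
  · obtain ⟨C, hC, hb⟩ := reg_big n m hm s hs0 hs
    refine ⟨max (V * (3 / 2) ^ (n + m) * 2 ^ s) (C * 3 ^ (n + m)), by positivity,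
      fun Y hY t ht ht2 => ?_⟩
    rcases lt_or_ge t (hatNorm n m Y / 3) with h3 | h3
    · refine (key Y t (2 ^ s * hatNorm n m Y ^ (-s)) ht (by positivity) ?_).trans ?_
      · intro X hX hX0
        have h1 : hatNorm n m Y ≤ hatNorm n m X + dist X Y := by
          have := hatNorm_add_le n m X (Y - X)
          rw [add_sub_cancel] at this
          have h2 := hatNorm_le_norm n m (Y - X)
          rw [← dist_eq_norm, dist_comm] at h2
          linarith
        have h2 : hatNorm n m Y / 2 ≤ hatNorm n m X := by linarith [hX.1]
        calc hatNorm n m X ^ (-s) ≤ (hatNorm n m Y / 2) ^ (-s) :=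
              Real.rpow_le_rpow_of_nonpos (by positivity) h2 (by linarith)
          _ = _ := by
            rw [Real.div_rpow hY.le (by norm_num), Real.rpow_neg (by norm_num : (0:ℝ) ≤ 2)]
            field_simp
      · apply ENNReal.ofReal_le_ofReal
        calc V * (3 / 2) ^ (n + m) * t ^ (n + m) * (2 ^ s * hatNorm n m Y ^ (-s))
            = (V * (3 / 2) ^ (n + m) * 2 ^ s) * t ^ (n + m) * hatNorm n m Y ^ (-s) := by ring
          _ ≤ _ := by gcongr; exact le_max_left _ _
    · refine (hb Y hY t ht2).trans (ENNReal.ofReal_le_ofReal ?_)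
      calc C * hatNorm n m Y ^ (n + m) * hatNorm n m Y ^ (-s)
          ≤ C * (3 * t) ^ (n + m) * hatNorm n m Y ^ (-s) := by gcongr; linarith
        _ = (C * 3 ^ (n + m)) * t ^ (n + m) * hatNorm n m Y ^ (-s) := by rw [mul_pow]; ring
        _ ≤ _ := by gcongr; exact le_max_right _ _

lemma wm_ball_lt_top (n m : ℕ) (hm : 1 ≤ m) (s : ℝ) (hs : s < m) (R : ℝ) :
    wm n m s (Metric.ball 0 R) < ∞ := by
  obtain ⟨C, hC, hb⟩ := reg_bound n m hm s hs
  obtain ⟨e, he, hlin⟩ := exists_dir n m hm 0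
  set r := max R 1
  have hr : 0 < r := lt_of_lt_of_le one_pos (le_max_right _ _)
  have h0 : hatNorm n m 0 = 0 := by simp [hatNorm]
  have hY : hatNorm n m (r • e) = r := by
    have := hlin r hr.le
    simpa [h0] using this
  refine lt_of_le_of_lt (measure_mono ?_) (lt_of_le_of_lt
    (hb (r • e) (by rw [hY]; exact hr) (2 * r) (by positivity) (by rw [hY])) ENNReal.ofReal_lt_top)
  intro X hX
  have hX1 : ‖X‖ < r := lt_of_lt_of_le (by simpa using hX) (le_max_left _ _)
  refine ⟨?_, ?_⟩
  · rw [dist_eq_norm]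
    have := norm_sub_le X (r • e)
    rw [norm_smul, he, Real.norm_of_nonneg hr.le] at this
    linarith
  · rw [hY]; exact (hatNorm_le_norm n m X).trans hX1.le

lemma min_integral (N A B ρ c : ℝ) (hN : 2 ≤ N) (hA : 0 < A) (hB : 0 ≤ B) (hρ : 0 < ρ)
    (hc0 : 0 ≤ c) (hc1 : c ≤ 1) (F : ℝ → ℝ≥0∞)
    (h1 : ∀ t, 0 < t → t ≤ ρ → F t ≤ ENNReal.ofReal A)
    (h2 : ∀ t, 0 < t → t ≤ ρ → F t ≤ ENNReal.ofReal (B * t ^ (-N))) :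
    ∫⁻ t in Set.Ioc 0 ρ, F t ≤
      ENNReal.ofReal (2 * A ^ ((N - 1 + c) / N) * ρ ^ c * B ^ ((1 - c) / N)) := by
  rcases hB.eq_or_lt with hB0 | hB0
  · have : ∫⁻ t in Set.Ioc 0 ρ, F t ≤ ∫⁻ t in Set.Ioc 0 ρ, 0 := by
      refine setLIntegral_mono measurable_const fun t ht => ?_
      simpa [← hB0] using h2 t ht.1 ht.2
    exact this.trans (by simp)
  have hN0 : 0 < N := by linarith
  set r := (B / A) ^ (1 / N) with hr
  have hr0 : 0 < r := by positivity
  have hrN : r ^ N = B / A := by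
    rw [hr, ← Real.rpow_mul (by positivity), one_div_mul_cancel hN0.ne', Real.rpow_one]
  have b1 : ∫⁻ t in Set.Ioc 0 ρ, F t ≤ ENNReal.ofReal (A * ρ) := by
    calc ∫⁻ t in Set.Ioc 0 ρ, F t ≤ ∫⁻ t in Set.Ioc 0 ρ, ENNReal.ofReal A :=
          setLIntegral_mono measurable_const fun t ht => h1 t ht.1 ht.2
      _ = _ := by
        rw [setLIntegral_const, Real.volume_Ioc, sub_zero, ENNReal.ofReal_mul hA.le]
  have b2 : ∫⁻ t in Set.Ioc 0 ρ, F t ≤ ENNReal.ofReal (2 * A * r) := by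
    set G : ℝ → ℝ≥0∞ := fun t => (Set.Ioc 0 r).indicator (fun _ => ENNReal.ofReal A) t +
      (Set.Ioi r).indicator (fun t => ENNReal.ofReal (B * t ^ (-N))) t with hG
    have hmeas : Measurable fun t : ℝ => ENNReal.ofReal (B * t ^ (-N)) := by fun_prop
    calc ∫⁻ t in Set.Ioc 0 ρ, F t ≤ ∫⁻ t in Set.Ioc 0 ρ, G t := by
          refine setLIntegral_mono ?_ fun t ht => ?_
          · exact (measurable_const.indicator measurableSet_Ioc).add
              (hmeas.indicator measurableSet_Ioi)
          · rcases le_or_gt t r with htr | htr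
            · refine (h1 t ht.1 ht.2).trans ?_
              simp [hG, Set.indicator, ht.1, htr]
            · refine (h2 t ht.1 ht.2).trans ?_
              simp [hG, Set.indicator, htr, not_le.2 htr]
      _ ≤ ∫⁻ t, G t := setLIntegral_le_lintegral _ _
      _ = ENNReal.ofReal (A * r) + ENNReal.ofReal (B * (-r ^ (-N + 1) / (-N + 1))) := by
          rw [lintegral_add_left (measurable_const.indicator measurableSet_Ioc),
            lintegral_indicator measurableSet_Ioc, lintegral_indicator measurableSet_Ioi,
            setLIntegral_const, Real.volume_Ioc, sub_zero, ← ENNReal.ofReal_mul hA.le]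
          congr 1
          rw [← integral_Ioi_rpow_of_lt (by linarith) hr0, ← integral_const_mul,
            ofReal_integral_eq_lintegral_ofReal]
          · exact (integrableOn_Ioi_rpow_of_lt (by linarith) hr0).const_mul B
          · refine (ae_restrict_iff' measurableSet_Ioi).2 (Filter.Eventually.of_forall fun t ht => ?_)
            have : 0 < t := hr0.trans ht
            show 0 ≤ B * t ^ (-N)
            positivity
      _ ≤ ENNReal.ofReal (A * r) + ENNReal.ofReal (A * r) := by
          refine add_le_add le_rfl (ENNReal.ofReal_le_ofReal ?_)
          rw [Real.rpow_add hr0, Real.rpow_neg hr0.le, hrN, Real.rpow_one]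
          have : B * (-((B / A)⁻¹ * r) / (-N + 1)) = A * r / (N - 1) := by
            have h1 : -N + 1 ≠ 0 := by linarith
            have h2 : N - 1 ≠ 0 := by linarith
            field_simp
            ring
          rw [this]
          exact div_le_self (by positivity) (by linarith)
      _ = _ := by rw [← ENNReal.ofReal_add (by positivity) (by positivity)]; congr 1; ring
  have b3 := le_min b1 b2
  rw [← ENNReal.ofReal_min] at b3
  refine b3.trans (ENNReal.ofReal_le_ofReal ?_)
  set M := min (A * ρ) (2 * A * r) with hM
  have hM0 : 0 < M := by positivity
  calc M = M ^ c * M ^ (1 - c) := by rw [← Real.rpow_add hM0]; simp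
    _ ≤ (A * ρ) ^ c * (2 * A * r) ^ (1 - c) := by
        have h1 : M ≤ A * ρ := min_le_left _ _
        have h2 : M ≤ 2 * A * r := min_le_right _ _
        have h3 : 0 ≤ 1 - c := by linarith
        gcongr
    _ = 2 ^ (1 - c) * A * ρ ^ c * (B / A) ^ ((1 - c) / N) := by
        rw [Real.mul_rpow hA.le hρ.le, Real.mul_rpow (by positivity) hr0.le,
          Real.mul_rpow (by positivity) hA.le, hr, ← Real.rpow_mul (by positivity)]
        have : A ^ c * A ^ (1 - c) = A := by rw [← Real.rpow_add hA]; simp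
        rw [show 1 / N * (1 - c) = (1 - c) / N by ring]
        linear_combination (2 ^ (1 - c) * ρ ^ c * (B / A) ^ ((1 - c) / N)) * this
    _ ≤ 2 ^ (1:ℝ) * A * ρ ^ c * (B / A) ^ ((1 - c) / N) := by
        gcongr
        · norm_num
        · linarith
    _ = _ := by
        have : A * (B / A) ^ ((1 - c) / N) = A ^ ((N - 1 + c) / N) * B ^ ((1 - c) / N) := by
          rw [Real.div_rpow hB hA.le]
          have : A = A ^ ((N - 1 + c) / N) * A ^ ((1 - c) / N) := by
            rw [← Real.rpow_add hA, ← add_div, show N - 1 + c + (1 - c) = N by ring,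
              div_self hN0.ne', Real.rpow_one]
          have hA' : A ^ ((1 - c) / N) ≠ 0 := by positivity
          nth_rewrite 1 [this]
          field_simp
        rw [Real.rpow_one]
        linear_combination (2 * ρ ^ c) * this

lemma ray_bound {n m : ℕ} (v : EE n m → ℝ) (hv : ContDiff ℝ 1 v) (hc : HasCompactSupport v)
    (X Z : EE n m) (hZ : Z ≠ 0) :
    ‖v X‖ₑ ≤ ∫⁻ t in Set.Ioi (0:ℝ), ‖Z‖ₑ * ‖fderiv ℝ v (X + t • Z)‖ₑ := by
  set f : ℝ → ℝ := fun τ => v (X + τ • (-Z)) with hf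
  have hf1 : ContDiff ℝ 1 f := by fun_prop
  have hcl : Topology.IsClosedEmbedding (fun τ : ℝ => X + τ • (-Z)) :=
    (Homeomorph.addLeft X).isClosedEmbedding.comp (isClosedEmbedding_smul_left (neg_ne_zero.2 hZ))
  have hf2 : HasCompactSupport f := hc.comp_isClosedEmbedding hcl
  have h := hf2.enorm_le_lintegral_Ici_deriv hf1 0
  have hd : ∀ τ, ‖deriv f τ‖ₑ ≤ ‖Z‖ₑ * ‖fderiv ℝ v (X + (-τ) • Z)‖ₑ := by
    intro τ
    have h1 : HasDerivAt (fun τ : ℝ => X + τ • (-Z)) (-Z) τ := by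
      simpa using ((hasDerivAt_id τ).smul_const (-Z)).const_add X
    have h2 : HasDerivAt f (fderiv ℝ v (X + τ • (-Z)) (-Z)) τ :=
      ((hv.differentiable one_ne_zero) _).hasFDerivAt.comp_hasDerivAt τ h1
    rw [h2.deriv, mul_comm, show X + (-τ) • Z = X + τ • (-Z) by simp]
    refine (ContinuousLinearMap.le_opENorm _ _).trans ?_
    rw [enorm_neg]
  have h0 : f 0 = v X := by simp [hf]
  rw [h0] at h
  refine h.trans ((lintegral_mono hd).trans (le_of_eq ?_))
  have mp := Measure.measurePreserving_neg (volume : Measure ℝ)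
  have := mp.setLIntegral_comp_preimage_emb (MeasurableEquiv.neg ℝ).measurableEmbedding
    (fun t => ‖Z‖ₑ * ‖fderiv ℝ v (X + t • Z)‖ₑ) (Set.Ici 0)
  rw [Measure.restrict_congr_set Ioi_ae_eq_Ici, ← this]
  simp

lemma lintegral_affine {n m : ℕ} (X : EE n m) (t : ℝ) (ht : 0 < t) (φ : EE n m → ℝ≥0∞)
    (hφ : Measurable φ) :
    ∫⁻ Z, φ (X + t • Z) = ENNReal.ofReal (t ^ (-((n + m : ℕ) : ℝ))) * ∫⁻ Y, φ Y := by
  have h1 : ∫⁻ Z, φ (X + t • Z) = ∫⁻ W, φ (X + W) ∂(Measure.map (fun Z : EE n m => t • Z) volume) := by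
    rw [lintegral_map (by fun_prop) (by fun_prop)]
  rw [h1, Measure.map_addHaar_smul _ ht.ne', lintegral_smul_measure, lintegral_add_left_eq_self]
  rw [finrank_euclideanSpace, Real.rpow_neg ht.le, Real.rpow_natCast, abs_of_pos (by positivity)]
  simp

abbrev PS (n m : ℕ) (X Y : EE n m) (t : ℝ) : Prop :=
  dist X Y < 3 / 2 * t ∧ hatNorm n m X ≤ hatNorm n m Y ∧ t ≤ 2 * hatNorm n m Y

lemma measurableSet_PS (n m : ℕ) :
    MeasurableSet {z : EE n m × ℝ × EE n m | PS n m z.1 z.2.2 z.2.1} := by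
  have h1 := measurable_hatNorm n m
  refine MeasurableSet.inter (measurableSet_lt (f := fun z : EE n m × ℝ × EE n m => dist z.1 z.2.2)
      (g := fun z : EE n m × ℝ × EE n m => 3 / 2 * z.2.1) (by fun_prop) (by fun_prop))
    (MeasurableSet.inter (measurableSet_le
      (f := fun z : EE n m × ℝ × EE n m => hatNorm n m z.1)
      (g := fun z : EE n m × ℝ × EE n m => hatNorm n m z.2.2) (by fun_prop) (by fun_prop))
      (measurableSet_le (f := fun z : EE n m × ℝ × EE n m => z.2.1)
      (g := fun z : EE n m × ℝ × EE n m => 2 * hatNorm n m z.2.2) (by fun_prop) (by fun_prop)))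

open Classical in
abbrev kk (n m : ℕ) (X : EE n m) (t : ℝ) (Y : EE n m) : ℝ≥0∞ :=
  if PS n m X Y t then ENNReal.ofReal (t ^ (-((n + m : ℕ) : ℝ))) else 0

lemma measurable_kk (n m : ℕ) :
    Measurable (fun z : EE n m × ℝ × EE n m => kk n m z.1 z.2.1 z.2.2) := by
  exact Measurable.ite (measurableSet_PS n m) (by fun_prop) measurable_const

lemma point_bound (n m : ℕ) (hm : 1 ≤ m) (v : EE n m → ℝ) (hv : ContDiff ℝ 1 v)
    (hc : HasCompactSupport v) (X : EE n m) :
    volume (Metric.ball (0 : EE n m) (1 / 2)) * ‖v X‖ₑ ≤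
      ENNReal.ofReal (3 / 2) * ∫⁻ t in Set.Ioi (0:ℝ), ∫⁻ Y, kk n m X t Y * ‖fderiv ℝ v Y‖ₑ := by
  classical
  obtain ⟨e, he, hlin⟩ := exists_dir n m hm X
  have hg : Continuous (fun Y => ‖fderiv ℝ v Y‖ₑ) := (hv.continuous_fderiv one_ne_zero).enorm
  set g := fun Y => ‖fderiv ℝ v Y‖ₑ with hgdef
  have hball : volume (Metric.ball (0 : EE n m) (1 / 2)) = volume (Metric.ball e (1 / 2)) := by
    rw [Measure.addHaar_ball_center _ e]
  have hZ : ∀ Z ∈ Metric.ball e (1/2), ‖Z‖ ≤ 3 / 2 ∧ Z ≠ 0 := by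
    intro Z hZ
    rw [Metric.mem_ball, dist_eq_norm] at hZ
    constructor
    · have := norm_le_norm_add_norm_sub e Z
      rw [norm_sub_rev] at hZ
      linarith [norm_sub_rev e Z]
    · rintro rfl
      rw [zero_sub, norm_neg, he] at hZ
      norm_num at hZ
  calc volume (Metric.ball (0 : EE n m) (1 / 2)) * ‖v X‖ₑ
      = ∫⁻ Z in Metric.ball e (1/2), ‖v X‖ₑ := by rw [setLIntegral_const, hball, mul_comm]
    _ ≤ ∫⁻ Z in Metric.ball e (1/2), ∫⁻ t in Set.Ioi (0:ℝ), ENNReal.ofReal (3/2) * g (X + t • Z) := by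
        refine setLIntegral_mono' measurableSet_ball fun Z hZ' => ?_
        refine (ray_bound v hv hc X Z (hZ Z hZ').2).trans ?_
        gcongr
        rw [← ofReal_norm]
        exact ENNReal.ofReal_le_ofReal (hZ Z hZ').1
    _ = ∫⁻ t in Set.Ioi (0:ℝ), ∫⁻ Z in Metric.ball e (1/2), ENNReal.ofReal (3/2) * g (X + t • Z) := by
        apply lintegral_lintegral_swap
        apply Measurable.aemeasurable
        apply Measurable.const_mul
        exact (hg.comp (by fun_prop)).measurable
    _ = ∫⁻ t in Set.Ioi (0:ℝ), ENNReal.ofReal (3/2) * ∫⁻ Z in Metric.ball e (1/2), g (X + t • Z) := by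
        refine lintegral_congr fun t => ?_
        rw [lintegral_const_mul' _ _ ENNReal.ofReal_ne_top]
    _ = ENNReal.ofReal (3/2) * ∫⁻ t in Set.Ioi (0:ℝ), ∫⁻ Z in Metric.ball e (1/2), g (X + t • Z) := by
        rw [lintegral_const_mul' _ _ ENNReal.ofReal_ne_top]
    _ ≤ _ := by
        gcongr 1
        refine setLIntegral_mono' measurableSet_Ioi fun t ht => ?_
        have ht : 0 < t := ht
        have hmeasφ : Measurable (fun Y => if PS n m X Y t then g Y else 0) := by
          refine Measurable.ite ?_ hg.measurable measurable_const
          exact (measurableSet_PS n m).preimage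
            (f := fun Y : EE n m => (X, t, Y)) (by fun_prop)
        calc ∫⁻ Z in Metric.ball e (1/2), g (X + t • Z)
            ≤ ∫⁻ Z in Metric.ball e (1/2), (fun Y => if PS n m X Y t then g Y else 0) (X + t • Z) := by
              refine setLIntegral_mono' measurableSet_ball fun Z hZ' => ?_
              have hPS : PS n m X (X + t • Z) t := by
                have hW : X + t • Z = (X + t • e) + t • (Z - e) := by rw [smul_sub]; abel
                have h2 : hatNorm n m X + t ≤ hatNorm n m (X + t • Z) + t / 2 := by
                  rw [← hlin t ht.le]
                  have := hatNorm_add_le n m (X + t • Z) (t • (e - Z))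
                  rw [show X + t • Z + t • (e - Z) = X + t • e by rw [smul_sub]; abel] at this
                  refine this.trans ?_
                  gcongr
                  refine (hatNorm_le_norm n m _).trans ?_
                  rw [norm_smul, Real.norm_of_nonneg ht.le]
                  rw [Metric.mem_ball, dist_eq_norm, norm_sub_rev] at hZ'
                  nlinarith
                have h3 := hatNorm_nonneg n m X
                refine ⟨?_, by linarith, by linarith⟩
                rw [dist_eq_norm, show X - (X + t • Z) = -(t • Z) by abel, norm_neg, norm_smul,
                  Real.norm_of_nonneg ht.le]
                have := norm_le_norm_add_norm_sub e Z
                rw [Metric.mem_ball, dist_eq_norm] at hZ'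
                have h4 : ‖Z‖ < 3 / 2 := by linarith [norm_sub_rev e Z]
                nlinarith
              simp only [if_pos hPS]
              exact le_rfl
          _ ≤ ∫⁻ Z, (fun Y => if PS n m X Y t then g Y else 0) (X + t • Z) :=
              setLIntegral_le_lintegral _ _
          _ = _ := by
              rw [lintegral_affine X t ht _ hmeasφ, ← lintegral_const_mul' _ _ ENNReal.ofReal_ne_top]
              refine lintegral_congr fun Y => ?_
              by_cases h : PS n m X Y t <;> simp [kk, h, hgdef]


lemma kernel_bound (n m : ℕ) (hm : 1 ≤ m) (hnm : 2 ≤ n + m) (s c : ℝ) (hs : s < m)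
    (hc0 : 0 ≤ c) (hc1 : c ≤ 1) :
    ∃ C : ℝ, 0 < C ∧ ∀ E : Set (EE n m), MeasurableSet E → wm n m s E < ∞ → ∀ Y : EE n m,
      ∫⁻ t in Set.Ioi (0:ℝ), ∫⁻ X in E, kk n m X t Y ∂(wm n m s) ≤
        ENNReal.ofReal C * wm n m s E ^ ((1 - c) / ((n + m : ℕ) : ℝ)) *
          ENNReal.ofReal (hatNorm n m Y) ^
            (c - s * ((((n + m : ℕ) : ℝ) - 1 + c) / ((n + m : ℕ) : ℝ))) := by
  classical
  obtain ⟨C, hC, hb⟩ := reg_bound n m hm s hs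
  set N : ℝ := ((n + m : ℕ) : ℝ) with hN
  have hN2 : 2 ≤ N := by rw [hN]; exact_mod_cast hnm
  set d := (N - 1 + c) / N with hd
  refine ⟨2 * C ^ d * 2 ^ c, by positivity, fun E hE hEfin Y => ?_⟩
  have hout : ∀ t, 0 < t → 2 * hatNorm n m Y < t → ∫⁻ X in E, kk n m X t Y ∂(wm n m s) = 0 := by
    intro t ht h
    have : ∀ X, kk n m X t Y = 0 := by
      intro X
      rw [kk, if_neg]
      rintro ⟨_, _, h3⟩
      linarith
    simp [this]
  rcases (hatNorm_nonneg n m Y).eq_or_lt with h0 | h0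
  · have : ∫⁻ t in Set.Ioi (0:ℝ), ∫⁻ X in E, kk n m X t Y ∂(wm n m s) = 0 := by
      rw [setLIntegral_congr_fun (g := fun _ => 0) measurableSet_Ioi]
      · simp
      · intro t ht
        exact hout t ht (by rw [← h0]; simpa using ht)
    rw [this]; exact zero_le
  set h := hatNorm n m Y with hh
  have hF : ∀ t, 0 < t → ∫⁻ X in E, kk n m X t Y ∂(wm n m s) ≤
      ENNReal.ofReal (t ^ (-N)) * wm n m s (E ∩ reg n m Y t) := by
    intro t ht
    calc ∫⁻ X in E, kk n m X t Y ∂(wm n m s)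
        ≤ ∫⁻ X in E, (reg n m Y t).indicator (fun _ => ENNReal.ofReal (t ^ (-N))) X ∂(wm n m s) := by
          refine lintegral_mono fun X => ?_
          by_cases hP : PS n m X Y t
          · have : X ∈ reg n m Y t := ⟨hP.1, hP.2.1⟩
            rw [Set.indicator_of_mem this, kk, if_pos hP]
          · rw [kk, if_neg hP]; exact zero_le
      _ = _ := by
          rw [lintegral_indicator (measurableSet_reg n m Y t), setLIntegral_const,
            Measure.restrict_apply (measurableSet_reg n m Y t), Set.inter_comm]
  have hsplit : ∫⁻ t in Set.Ioi (0:ℝ), ∫⁻ X in E, kk n m X t Y ∂(wm n m s)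
      = ∫⁻ t in Set.Ioc 0 (2 * h), ∫⁻ X in E, kk n m X t Y ∂(wm n m s) := by
    rw [← Set.Ioc_union_Ioi_eq_Ioi (show (0:ℝ) ≤ 2 * h by positivity),
      lintegral_union measurableSet_Ioi (Set.Ioc_disjoint_Ioi le_rfl)]
    have : ∫⁻ t in Set.Ioi (2 * h), ∫⁻ X in E, kk n m X t Y ∂(wm n m s) = 0 := by
      rw [setLIntegral_congr_fun (g := fun _ => 0) measurableSet_Ioi]
      · simp
      · intro t ht
        have ht' : 2 * h < t := ht
        exact hout t (by linarith) ht'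
    rw [this, add_zero]
  rw [hsplit]
  set B := (wm n m s E).toReal with hB
  have hB0 : 0 ≤ B := ENNReal.toReal_nonneg
  have hBe : wm n m s E = ENNReal.ofReal B := (ENNReal.ofReal_toReal hEfin.ne).symm
  refine (min_integral N (C * h ^ (-s)) B (2 * h) c hN2 (by positivity) hB0 (by positivity)
    hc0 hc1 _ ?_ ?_).trans (le_of_eq ?_)
  · intro t ht ht2
    refine (hF t ht).trans ?_
    refine (mul_le_mul_right ((measure_mono Set.inter_subset_right).trans (hb Y h0 t ht ht2)) _).trans ?_
    rw [← ENNReal.ofReal_mul (by positivity)]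
    apply ENNReal.ofReal_le_ofReal
    rw [Real.rpow_neg ht.le, hN, Real.rpow_natCast]
    apply le_of_eq
    rw [← hh]
    field_simp
  · intro t ht ht2
    refine (hF t ht).trans ?_
    refine (mul_le_mul_right (measure_mono Set.inter_subset_left) _).trans ?_
    rw [hBe, ← ENNReal.ofReal_mul (by positivity), mul_comm]
  · have hexp : 0 ≤ (1 - c) / N := div_nonneg (by linarith) (by linarith)
    rw [hBe, ENNReal.ofReal_rpow_of_nonneg hB0 hexp, ENNReal.ofReal_rpow_of_pos h0,
      ← ENNReal.ofReal_mul (by positivity), ← ENNReal.ofReal_mul (by positivity)]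
    congr 1
    rw [Real.mul_rpow hC.le (by positivity), Real.mul_rpow (by norm_num) h0.le,
      ← Real.rpow_mul h0.le, ← hd, sub_eq_neg_add c (s * d), Real.rpow_add h0, neg_mul]
    ring

lemma weak_ineq (n m : ℕ) (hm : 1 ≤ m) (hnm : 2 ≤ n + m) (s c : ℝ) (hs : s < m)
    (hc0 : 0 ≤ c) (hc1 : c ≤ 1) :
    ∃ C : ℝ, 0 < C ∧ ∀ E : Set (EE n m), MeasurableSet E → wm n m s E < ∞ →
      ∀ v : EE n m → ℝ, ContDiff ℝ 1 v → HasCompactSupport v →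
      ∫⁻ X in E, ‖v X‖ₑ ∂(wm n m s) ≤
        ENNReal.ofReal C * wm n m s E ^ ((1 - c) / ((n + m : ℕ) : ℝ)) *
        ∫⁻ Y, ENNReal.ofReal (hatNorm n m Y) ^
            (c - s * ((((n + m : ℕ) : ℝ) - 1 + c) / ((n + m : ℕ) : ℝ))) * ‖fderiv ℝ v Y‖ₑ := by
  obtain ⟨C, hC, hb⟩ := kernel_bound n m hm hnm s c hs hc0 hc1
  set V := (volume (Metric.ball (0 : EE n m) (1 / 2))) with hV
  have hV0 : V ≠ 0 := (Metric.measure_ball_pos _ _ (by norm_num)).ne'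
  have hVt : V ≠ ∞ := measure_ball_lt_top.ne
  have hVr : 0 < V.toReal := ENNReal.toReal_pos hV0 hVt
  refine ⟨3 / 2 * C / V.toReal, by positivity, fun E hE hEfin v hv hc => ?_⟩
  set N : ℝ := ((n + m : ℕ) : ℝ) with hN
  set a := c - s * ((N - 1 + c) / N) with ha
  set g := fun Y => ‖fderiv ℝ v Y‖ₑ with hgdef
  have hg : Continuous g := (hv.continuous_fderiv one_ne_zero).enorm
  have hgm : Measurable g := hg.measurable
  have hk := measurable_kk n m
  have hkg : Measurable (fun z : EE n m × ℝ × EE n m => kk n m z.1 z.2.1 z.2.2 * g z.2.2) :=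
    hk.mul (hgm.comp (by fun_prop))
  have step : V * ∫⁻ X in E, ‖v X‖ₑ ∂(wm n m s) ≤
      ENNReal.ofReal (3 / 2) * (ENNReal.ofReal C * wm n m s E ^ ((1 - c) / N) *
        ∫⁻ Y, ENNReal.ofReal (hatNorm n m Y) ^ a * g Y) := by
    calc V * ∫⁻ X in E, ‖v X‖ₑ ∂(wm n m s)
        = ∫⁻ X in E, V * ‖v X‖ₑ ∂(wm n m s) := by rw [lintegral_const_mul' _ _ hVt]
      _ ≤ ∫⁻ X in E, ENNReal.ofReal (3 / 2) *
            (∫⁻ t in Set.Ioi (0:ℝ), ∫⁻ Y, kk n m X t Y * g Y) ∂(wm n m s) :=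
          lintegral_mono fun X => point_bound n m hm v hv hc X
      _ = ENNReal.ofReal (3 / 2) * ∫⁻ X in E,
            (∫⁻ t in Set.Ioi (0:ℝ), ∫⁻ Y, kk n m X t Y * g Y) ∂(wm n m s) := by
          rw [lintegral_const_mul' _ _ ENNReal.ofReal_ne_top]
      _ ≤ _ := by
          gcongr 1
          calc ∫⁻ X in E, (∫⁻ t in Set.Ioi (0:ℝ), ∫⁻ Y, kk n m X t Y * g Y) ∂(wm n m s)
              = ∫⁻ t in Set.Ioi (0:ℝ), ∫⁻ X in E, (∫⁻ Y, kk n m X t Y * g Y) ∂(wm n m s) := by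
                apply lintegral_lintegral_swap
                apply Measurable.aemeasurable
                apply Measurable.lintegral_prod_right' (f := fun z : (EE n m × ℝ) × EE n m =>
                  kk n m z.1.1 z.1.2 z.2 * g z.2)
                exact hkg.comp (g := fun z : EE n m × ℝ × EE n m => kk n m z.1 z.2.1 z.2.2 * g z.2.2)
                  (f := fun z : (EE n m × ℝ) × EE n m => (z.1.1, z.1.2, z.2)) (by fun_prop)
            _ = ∫⁻ t in Set.Ioi (0:ℝ), ∫⁻ Y, ∫⁻ X in E, kk n m X t Y * g Y ∂(wm n m s) := by
                refine lintegral_congr fun t => ?_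
                apply lintegral_lintegral_swap
                apply Measurable.aemeasurable
                exact hkg.comp (g := fun z : EE n m × ℝ × EE n m => kk n m z.1 z.2.1 z.2.2 * g z.2.2)
                  (f := fun z : EE n m × EE n m => (z.1, t, z.2)) (by fun_prop)
            _ = ∫⁻ Y, ∫⁻ t in Set.Ioi (0:ℝ), ∫⁻ X in E, kk n m X t Y * g Y ∂(wm n m s) := by
                apply lintegral_lintegral_swap
                apply Measurable.aemeasurable
                apply Measurable.lintegral_prod_right' (f := fun z : (ℝ × EE n m) × EE n m =>
                  kk n m z.2 z.1.1 z.1.2 * g z.1.2)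
                exact hkg.comp (g := fun z : EE n m × ℝ × EE n m => kk n m z.1 z.2.1 z.2.2 * g z.2.2)
                  (f := fun z : (ℝ × EE n m) × EE n m => (z.2, z.1.1, z.1.2)) (by fun_prop)
            _ = ∫⁻ Y, (∫⁻ t in Set.Ioi (0:ℝ), ∫⁻ X in E, kk n m X t Y ∂(wm n m s)) * g Y := by
                refine lintegral_congr fun Y => ?_
                have hgt : g Y ≠ ∞ := enorm_ne_top
                rw [← lintegral_mul_const' _ _ hgt]
                refine lintegral_congr fun t => ?_
                rw [← lintegral_mul_const' _ _ hgt]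
            _ ≤ ∫⁻ Y, (ENNReal.ofReal C * wm n m s E ^ ((1 - c) / N)) *
                  (ENNReal.ofReal (hatNorm n m Y) ^ a * g Y) := by
                refine lintegral_mono fun Y => ?_
                rw [← mul_assoc]
                exact mul_le_mul_left (hb E hE hEfin Y) _
            _ = _ := by
                rw [lintegral_const_mul]
                exact ((measurable_hatNorm n m).ennreal_ofReal.pow_const _).mul hgm
  have h2 : ∫⁻ X in E, ‖v X‖ₑ ∂(wm n m s) = V⁻¹ * (V * ∫⁻ X in E, ‖v X‖ₑ ∂(wm n m s)) := by
    rw [← mul_assoc, ENNReal.inv_mul_cancel hV0 hVt, one_mul]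
  rw [h2]
  refine (mul_le_mul_right step _).trans (le_of_eq ?_)
  rw [show 3 / 2 * C / V.toReal = V.toReal⁻¹ * (3 / 2 * C) by ring,
    ENNReal.ofReal_mul (by positivity), ENNReal.ofReal_mul (by norm_num),
    ENNReal.ofReal_inv_of_pos hVr, ENNReal.ofReal_toReal hVt]
  ring


lemma exists_trunc : ∃ (Ψ : ℝ → ℝ) (M : ℝ), 0 < M ∧ ContDiff ℝ 1 Ψ ∧ Ψ 0 = 0 ∧
    (∀ r, 2 ≤ |r| → Ψ r = 1) ∧ (∀ r, |deriv Ψ r| ≤ M) ∧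
    (∀ r, |r| < 1 → deriv Ψ r = 0) ∧ (∀ r, 2 ≤ |r| → deriv Ψ r = 0) := by
  set Ψ : ℝ → ℝ := fun r => Real.smoothTransition (r ^ 2 - 1) with hΨ
  have hC : ContDiff ℝ 1 Ψ := by
    have : ContDiff ℝ 1 Real.smoothTransition := Real.smoothTransition.contDiff (n := 1)
    exact this.comp (by fun_prop)
  have h1 : ∀ r : ℝ, 2 ≤ |r| → 2 < r ^ 2 := by
    intro r hr
    rw [← sq_abs]; nlinarith
  have hd1 : ∀ r, |r| < 1 → deriv Ψ r = 0 := by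
    intro r hr
    have : Ψ =ᶠ[nhds r] fun _ => 0 := by
      have ho : IsOpen {r : ℝ | |r| < 1} := isOpen_lt (by fun_prop) (by fun_prop)
      filter_upwards [ho.mem_nhds hr] with x hx
      apply Real.smoothTransition.zero_of_nonpos
      have : x ^ 2 < 1 := by rw [← sq_abs]; have := abs_nonneg x; have hx2 : |x| < 1 := hx; nlinarith
      linarith
    rw [this.deriv_eq]; simp
  have hd2 : ∀ r, 2 ≤ |r| → deriv Ψ r = 0 := by
    intro r hr
    have : Ψ =ᶠ[nhds r] fun _ => 1 := by
      have ho : IsOpen {r : ℝ | 2 < r ^ 2} := isOpen_lt (by fun_prop) (by fun_prop)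
      filter_upwards [ho.mem_nhds (h1 r hr)] with x hx
      apply Real.smoothTransition.one_of_one_le
      have hx2 : 2 < x ^ 2 := hx
      linarith
    rw [this.deriv_eq]; simp
  have hcont : Continuous (deriv Ψ) := hC.continuous_deriv le_rfl
  obtain ⟨M, hM⟩ := (isCompact_Icc (a := (-2:ℝ)) (b := 2)).exists_bound_of_continuousOn
    hcont.continuousOn
  refine ⟨Ψ, max M 1, by positivity, hC, ?_, ?_, ?_, hd1, hd2⟩
  · apply Real.smoothTransition.zero_of_nonpos; norm_num
  · intro r hr
    apply Real.smoothTransition.one_of_one_le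
    linarith [h1 r hr]
  · intro r
    rcases le_total 2 |r| with h | h
    · rw [hd2 r h, abs_zero]; positivity
    · exact (hM r (abs_le.1 h)).trans (le_max_left _ _)

lemma tsum_rpow_le {ι : Type*} (f : ι → ℝ≥0∞) (q : ℝ) (hq : 1 ≤ q) :
    ∑' i, f i ^ q ≤ (∑' i, f i) ^ q := by
  have h : ∀ x : ℝ≥0∞, x ^ q = x * x ^ (q - 1) := by
    intro x
    conv_lhs => rw [show q = 1 + (q - 1) by ring]
    rw [ENNReal.rpow_add_of_nonneg _ _ zero_le_one (by linarith), ENNReal.rpow_one]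
  calc ∑' i, f i ^ q = ∑' i, f i * f i ^ (q - 1) := by simp_rw [← h]
    _ ≤ ∑' i, f i * (∑' i, f i) ^ (q - 1) := by
        refine ENNReal.tsum_le_tsum fun i => ?_
        have h0 : 0 ≤ q - 1 := by linarith
        gcongr
        exact ENNReal.le_tsum i
    _ = _ := by rw [ENNReal.tsum_mul_right, ← h]

lemma L1_ineq (n m : ℕ) (hm : 1 ≤ m) (hnm : 2 ≤ n + m) (s c d : ℝ) (hs : s < m)
    (hc0 : 0 ≤ c) (hc1 : c ≤ 1) (hd : d = (((n + m : ℕ) : ℝ) - 1 + c) / ((n + m : ℕ) : ℝ)) :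
    ∃ C : ℝ, 0 < C ∧ 
      ∀ v : EE n m → ℝ, ContDiff ℝ 1 v → HasCompactSupport v →
      (∫⁻ X, ‖v X‖ₑ ^ (1 / d) ∂(wm n m s)) ^ d ≤
        ENNReal.ofReal C * 
        ∫⁻ Y, ENNReal.ofReal (hatNorm n m Y) ^ (c - s * d) * ‖fderiv ℝ v Y‖ₑ := by
  obtain ⟨C, hC, hw⟩ := weak_ineq n m hm hnm s c hs hc0 hc1
  rw [← hd] at hw
  obtain ⟨Ψ, M, hM, hΨ, hΨ0, hΨ1, hΨd, hΨd1, hΨd2⟩ := exists_trunc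
  set N : ℝ := ((n + m : ℕ) : ℝ) with hN
  have hN2 : 2 ≤ N := by rw [hN]; exact_mod_cast hnm
  have hd0 : 0 < d := by rw [hd]; apply div_pos <;> linarith
  have hd1 : d ≤ 1 := by rw [hd, div_le_one (by linarith)]; linarith
  have hcd : (1 - c) / N = 1 - d := by rw [hd]; field_simp; ring
  rw [hcd] at hw
  set q := 1 / d with hq
  have hq1 : 1 ≤ q := by rw [hq, le_div_iff₀ hd0]; linarith
  have hq0 : 0 < q := by linarith
  have hdq : d * q = 1 := by rw [hq]; field_simp
  set a := c - s * d with ha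
  refine ⟨4 * (C * M), by positivity, fun v hv hc => ?_⟩
  set w : EE n m → ℝ≥0∞ := fun Y => ENNReal.ofReal (hatNorm n m Y) ^ a * ‖fderiv ℝ v Y‖ₑ with hwdef
  set A : ℤ → Set (EE n m) := fun k => {X | (2:ℝ) ^ k ≤ |v X| ∧ |v X| < (2:ℝ) ^ (k + 1)} with hA
  have hvm : Measurable v := hv.continuous.measurable
  have hAm : ∀ k, MeasurableSet (A k) := fun k =>
    MeasurableSet.inter (measurableSet_le measurable_const (hvm.norm))
      (measurableSet_lt hvm.norm measurable_const)
  have hAd : Pairwise (Function.onFun Disjoint A) := by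
    intro i j hij
    rw [Function.onFun, Set.disjoint_left]
    rintro X ⟨h1, h2⟩ ⟨h3, h4⟩
    have e1 : i < j + 1 := by
      have := h1.trans_lt h4
      exact (zpow_lt_zpow_iff_right₀ (by norm_num : (1:ℝ) < 2)).1 this
    have e2 : j < i + 1 := by
      have := h3.trans_lt h2
      exact (zpow_lt_zpow_iff_right₀ (by norm_num : (1:ℝ) < 2)).1 this
    omega
  set I : ℤ → ℝ≥0∞ := fun k => ∫⁻ Y in A k, w Y with hI
  have hsumI : ∑' k, I k ≤ ∫⁻ Y, w Y := by
    rw [hI, ← lintegral_iUnion hAm hAd]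
    exact setLIntegral_le_lintegral _ _
  set E : ℤ → Set (EE n m) := fun k => {X | (2:ℝ) ^ (k + 1) ≤ |v X|} with hE
  have hEm : ∀ k, MeasurableSet (E k) := fun k => measurableSet_le measurable_const (hvm.norm)
  have hEfin : ∀ k, wm n m s (E k) < ∞ := by
    intro k
    obtain ⟨R, hR⟩ := hc.isCompact.isBounded.subset_ball (0 : EE n m)
    refine lt_of_le_of_lt (measure_mono (Set.Subset.trans ?_ hR)) (wm_ball_lt_top n m hm s hs R)
    intro X hX
    apply subset_tsupport
    intro h0
    have hX' : (2:ℝ) ^ (k + 1) ≤ |v X| := hX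
    rw [h0, abs_zero] at hX'
    have : (0:ℝ) < 2 ^ (k + 1) := by positivity
    linarith
  -- level estimate
  have hlev : ∀ k : ℤ, wm n m s (E k) ^ d ≤ ENNReal.ofReal (C * M * (2:ℝ) ^ (-k)) * I k := by
    intro k
    rcases eq_or_ne (wm n m s (E k)) 0 with h0 | h0
    · rw [h0, ENNReal.zero_rpow_of_pos hd0]; exact zero_le
    set vk : EE n m → ℝ := fun X => Ψ ((2:ℝ) ^ (-k) * v X) with hvk
    have hvk1 : ContDiff ℝ 1 vk := hΨ.comp (contDiff_const.mul hv)
    have hvk2 : HasCompactSupport vk :=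
      hc.comp_left (g := fun y => Ψ ((2:ℝ) ^ (-k) * y)) (by simp [hΨ0])
    have hgrad : ∀ Y, ENNReal.ofReal (hatNorm n m Y) ^ a * ‖fderiv ℝ vk Y‖ₑ ≤
        ENNReal.ofReal (M * (2:ℝ) ^ (-k)) * (A k).indicator w Y := by
      intro Y
      have hder : HasFDerivAt vk ((deriv Ψ ((2:ℝ) ^ (-k) * v Y)) • ((2:ℝ) ^ (-k)) • fderiv ℝ v Y) Y := by
        have e1 : HasFDerivAt (fun X => (2:ℝ) ^ (-k) * v X) (((2:ℝ) ^ (-k)) • fderiv ℝ v Y) Y :=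
          ((hv.differentiable one_ne_zero) Y).hasFDerivAt.const_mul _
        have e2 : HasDerivAt Ψ (deriv Ψ ((2:ℝ) ^ (-k) * v Y)) ((2:ℝ) ^ (-k) * v Y) :=
          ((hΨ.differentiable one_ne_zero) _).hasDerivAt
        exact e2.comp_hasFDerivAt Y e1
      rw [hder.fderiv]
      have habs : |(2:ℝ) ^ (-k) * v Y| = (2:ℝ) ^ (-k) * |v Y| := by
        rw [abs_mul, abs_of_pos (by positivity)]
      have hmul : (2:ℝ) ^ (-k) * (2:ℝ) ^ k = 1 := by
        rw [← zpow_add₀ (by norm_num)]; simp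
      have hp : (0:ℝ) < 2 ^ (-k) := by positivity
      by_cases hY : Y ∈ A k
      · rw [Set.indicator_of_mem hY, enorm_smul, enorm_smul, hwdef]
        calc _ = (‖deriv Ψ ((2:ℝ) ^ (-k) * v Y)‖ₑ * ‖(2:ℝ) ^ (-k)‖ₑ) *
              (ENNReal.ofReal (hatNorm n m Y) ^ a * ‖fderiv ℝ v Y‖ₑ) := by ring
          _ ≤ _ := by
            gcongr
            rw [ENNReal.ofReal_mul hM.le]
            gcongr
            · rw [← ofReal_norm]; exact ENNReal.ofReal_le_ofReal (hΨd _)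
            · rw [← ofReal_norm, Real.norm_of_nonneg hp.le]
      · have hz : deriv Ψ ((2:ℝ) ^ (-k) * v Y) = 0 := by
          rcases lt_or_ge |v Y| ((2:ℝ) ^ k) with h | h
          · apply hΨd1
            rw [habs, ← hmul]
            exact mul_lt_mul_of_pos_left h hp
          · apply hΨd2
            have h' : (2:ℝ) ^ (k + 1) ≤ |v Y| := by
              by_contra hlt
              exact hY ⟨h, not_le.1 hlt⟩
            rw [habs]
            calc (2:ℝ) = (2:ℝ) ^ (-k) * (2:ℝ) ^ (k + 1) := by
                  rw [zpow_add_one₀ (by norm_num), ← mul_assoc, hmul, one_mul]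
              _ ≤ _ := by gcongr
        rw [hz, zero_smul, ← ofReal_norm, norm_zero, ENNReal.ofReal_zero, mul_zero]; exact zero_le
    have hone : wm n m s (E k) ≤ ∫⁻ X in E k, ‖vk X‖ₑ ∂(wm n m s) := by
      rw [← setLIntegral_one]
      refine setLIntegral_mono' (hEm k) fun X hX => ?_
      have hX' : (2:ℝ) ^ (k + 1) ≤ |v X| := hX
      have : vk X = 1 := by
        apply hΨ1
        rw [abs_mul, abs_of_pos (by positivity)]
        calc (2:ℝ) = (2:ℝ) ^ (-k) * (2:ℝ) ^ (k + 1) := by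
              rw [← zpow_add₀ (by norm_num)]; simp
          _ ≤ _ := by gcongr
      rw [this]; simp
    have hmain : wm n m s (E k) ≤ wm n m s (E k) ^ (1 - d) *
        (ENNReal.ofReal (C * M * (2:ℝ) ^ (-k)) * I k) := by
      refine hone.trans ((hw (E k) (hEm k) (hEfin k) vk hvk1 hvk2).trans ?_)
      refine (mul_le_mul_right (lintegral_mono hgrad) _).trans (le_of_eq ?_)
      rw [lintegral_const_mul' _ _ ENNReal.ofReal_ne_top, lintegral_indicator (hAm k), mul_assoc C,
        ENNReal.ofReal_mul hC.le]
      ring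
    set μE := wm n m s (E k)
    have hsplit : μE = μE ^ (1 - d) * μE ^ d := by
      rw [← ENNReal.rpow_add _ _ h0 (hEfin k).ne]; simp
    have hx0 : μE ^ (1 - d) ≠ 0 := by
      rw [Ne, ENNReal.rpow_eq_zero_iff]
      rintro (⟨h, _⟩ | ⟨h, _⟩)
      · exact h0 h
      · exact (hEfin k).ne h
    have hxt : μE ^ (1 - d) ≠ ∞ :=
      ENNReal.rpow_ne_top_of_nonneg (by linarith) (hEfin k).ne
    exact (ENNReal.mul_le_mul_iff_right hx0 hxt).1 (le_trans (le_of_eq hsplit.symm) hmain)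
  have hint : ∫⁻ X, ‖v X‖ₑ ^ q ∂(wm n m s) ≤
      (ENNReal.ofReal (4 * (C * M)) * ∫⁻ Y, w Y) ^ q := by
    calc ∫⁻ X, ‖v X‖ₑ ^ q ∂(wm n m s)
        ≤ ∫⁻ X in ⋃ k : ℤ, A (k + 1), ‖v X‖ₑ ^ q ∂(wm n m s) := by
          rw [← lintegral_indicator (MeasurableSet.iUnion fun k => hAm _)]
          refine lintegral_mono fun X => ?_
          rcases eq_or_ne (v X) 0 with h0 | h0
          · simp [h0, hq0]
          · rw [Set.indicator_of_mem]
            obtain ⟨k, hk⟩ := exists_mem_Ico_zpow (abs_pos.2 h0) (by norm_num : (1:ℝ) < 2)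
            refine Set.mem_iUnion.2 ⟨k - 1, ?_⟩
            rw [sub_add_cancel]
            exact hk
      _ ≤ ∑' k : ℤ, ∫⁻ X in A (k + 1), ‖v X‖ₑ ^ q ∂(wm n m s) := lintegral_iUnion_le _ _
      _ ≤ ∑' k : ℤ, (ENNReal.ofReal (4 * (C * M)) * I k) ^ q := by
          refine ENNReal.tsum_le_tsum fun k => ?_
          calc ∫⁻ X in A (k + 1), ‖v X‖ₑ ^ q ∂(wm n m s)
              ≤ ∫⁻ X in A (k + 1), ENNReal.ofReal ((2:ℝ) ^ (k + 1 + 1)) ^ q ∂(wm n m s) := by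
                refine setLIntegral_mono' (hAm _) fun X hX => ?_
                gcongr
                rw [← ofReal_norm]
                exact ENNReal.ofReal_le_ofReal hX.2.le
            _ = ENNReal.ofReal ((2:ℝ) ^ (k + 1 + 1)) ^ q * wm n m s (A (k + 1)) := by
                rw [setLIntegral_const]
            _ ≤ ENNReal.ofReal ((2:ℝ) ^ (k + 1 + 1)) ^ q * wm n m s (E k) := by
                gcongr
                intro X hX
                exact hX.1
            _ = (ENNReal.ofReal ((2:ℝ) ^ (k + 1 + 1)) * wm n m s (E k) ^ d) ^ q := by
                rw [ENNReal.mul_rpow_of_nonneg _ _ hq0.le, ← ENNReal.rpow_mul, hdq, ENNReal.rpow_one]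
            _ ≤ (ENNReal.ofReal ((2:ℝ) ^ (k + 1 + 1)) *
                  (ENNReal.ofReal (C * M * (2:ℝ) ^ (-k)) * I k)) ^ q := by
                gcongr
                exact hlev k
            _ = _ := by
                rw [← mul_assoc, ← ENNReal.ofReal_mul (by positivity)]
                congr 3
                rw [zpow_add_one₀ (by norm_num), zpow_add_one₀ (by norm_num), zpow_neg]
                field_simp
                norm_num
      _ ≤ (∑' k : ℤ, ENNReal.ofReal (4 * (C * M)) * I k) ^ q := tsum_rpow_le _ _ hq1
      _ ≤ _ := by
          rw [ENNReal.tsum_mul_left]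
          gcongr
  calc (∫⁻ X, ‖v X‖ₑ ^ q ∂(wm n m s)) ^ d ≤
      ((ENNReal.ofReal (4 * (C * M)) * ∫⁻ Y, w Y) ^ q) ^ d := by gcongr
    _ = _ := by rw [← ENNReal.rpow_mul, mul_comm q, hdq, ENNReal.rpow_one]


/-- Weighted Sobolev inequality with partial variable weight `|x̂|` on `ℝ^{n+m}`. -/
theorem weighted_sobolev_Rnm
    (n m : ℕ) (hm : 1 ≤ m) (hnm : 2 ≤ n + m) (p q α β : ℝ)
    (hp1 : 1 < p) (hpq : p ≤ q)
    (hαβ : 0 ≤ α + β) (hα : α < m * (1 - 1 / p)) (hβ : β < m / q)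
    (hbal : 1 / q = 1 / p + (α + β - 1) / ((n : ℝ) + m)) :
    ∃ S : ℝ, 0 < S ∧
      ∀ u : EuclideanSpace ℝ (Fin n ⊕ Fin m) → ℝ,
        ContDiff ℝ (⊤ : ℕ∞) u → HasCompactSupport u →
        (∫⁻ X, ENNReal.ofReal (hatNorm n m X) ^ (-(β * q)) *
            ENNReal.ofReal |u X| ^ q) ^ (1 / q)
          ≤ ENNReal.ofReal S *
            (∫⁻ X, ENNReal.ofReal (hatNorm n m X) ^ (α * p) *
                ENNReal.ofReal ‖fderiv ℝ u X‖ ^ p) ^ (1 / p) := by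
  have hp0 : 0 < p := by linarith
  have hq0 : 0 < q := by linarith
  have hN2 : (2:ℝ) ≤ (n : ℝ) + m := by exact_mod_cast hnm
  have hN0 : (0:ℝ) < (n : ℝ) + m := by linarith
  have hqp : 1 / q ≤ 1 / p := one_div_le_one_div_of_le hp0 hpq
  have hc1 : α + β ≤ 1 := by
    by_contra hlt
    have : 0 < (α + β - 1) / ((n : ℝ) + m) := div_pos (by linarith) hN0
    linarith
  set d : ℝ := 1 + 1 / q - 1 / p with hd
  have hd' : d = (((n + m : ℕ) : ℝ) - 1 + (α + β)) / ((n + m : ℕ) : ℝ) := by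
    rw [hd, hbal]; push_cast; field_simp; ring
  have hip : 1 / p < 1 := by rw [div_lt_one hp0]; exact hp1
  have hiq : 0 < 1 / q := by positivity
  have hd0 : 0 < d := by linarith
  have hs : β * q < m := by rwa [lt_div_iff₀ hq0] at hβ
  obtain ⟨C, hC, hL⟩ := L1_ineq n m hm hnm (β * q) (α + β) d hs hαβ hc1 hd'
  set p' : ℝ := p / (p - 1) with hp'
  have hpm : 0 < p - 1 := by linarith
  have hp'0 : 0 < p' := div_pos hp0 hpm
  have hip' : 1 / p' = 1 - 1 / p := by rw [hp']; field_simp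
  have hconj : p.HolderConjugate p' := by
    rw [hp']; exact Real.HolderConjugate.conjExponent hp1
  set σ : ℝ := q * d with hσ
  have hσ' : σ - 1 = q * (1 / p') := by
    rw [hσ, hip', hd]; field_simp; ring
  have hσ1 : 1 < σ := by
    have : 0 < q * (1 / p') := by positivity
    linarith
  refine ⟨C * σ, by positivity, fun u hu hc => ?_⟩
  have hu1 : ContDiff ℝ 1 u := hu.of_le (by exact_mod_cast le_top)
  have hum : Measurable u := hu1.continuous.measurable
  have hfm : Measurable (fderiv ℝ u) := (hu1.continuous_fderiv one_ne_zero).measurable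
  set H : EE n m → ℝ≥0∞ := fun X => ENNReal.ofReal (hatNorm n m X) with hH
  have hHm : Measurable H := (measurable_hatNorm n m).ennreal_ofReal
  have e1 : (∫⁻ X, ENNReal.ofReal (hatNorm n m X) ^ (-(β * q)) * ENNReal.ofReal |u X| ^ q)
      = ∫⁻ X, ‖u X‖ₑ ^ q ∂(wm n m (β * q)) := by
    rw [wm, lintegral_withDensity_eq_lintegral_mul _ (measurable_wt n m _)
      (hum.enorm.pow_const q)]
    refine lintegral_congr fun X => ?_
    simp only [Pi.mul_apply, wt, ← ofReal_norm, Real.norm_eq_abs]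
  have e1' : (∫⁻ X, (H X ^ (-(β * q) * (1 / p')) * ‖u X‖ₑ ^ (q * (1 / p'))) ^ p')
      = ∫⁻ X, ‖u X‖ₑ ^ q ∂(wm n m (β * q)) := by
    rw [← e1]
    refine lintegral_congr fun X => ?_
    rw [ENNReal.mul_rpow_of_nonneg _ _ hp'0.le, ← ENNReal.rpow_mul, ← ENNReal.rpow_mul,
      mul_assoc, mul_assoc, one_div_mul_cancel hp'0.ne', mul_one, mul_one, ← ofReal_norm,
      Real.norm_eq_abs]
  have e2 : (∫⁻ X, ENNReal.ofReal (hatNorm n m X) ^ (α * p) * ENNReal.ofReal ‖fderiv ℝ u X‖ ^ p)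
      = ∫⁻ X, (H X ^ α * ‖fderiv ℝ u X‖ₑ) ^ p := by
    refine lintegral_congr fun X => ?_
    rw [ENNReal.mul_rpow_of_nonneg _ _ hp0.le, ← ENNReal.rpow_mul, ofReal_norm]
  rw [e1, e2]
  set A : ℝ≥0∞ := ∫⁻ X, ‖u X‖ₑ ^ q ∂(wm n m (β * q)) with hA
  set D : ℝ≥0∞ := (∫⁻ X, (H X ^ α * ‖fderiv ℝ u X‖ₑ) ^ p) ^ (1 / p) with hD
  have hAfin : A ≠ ∞ := by
    obtain ⟨R, hR⟩ := hc.isCompact.isBounded.subset_ball (0 : EE n m)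
    obtain ⟨M, hM⟩ := hc.exists_bound_of_continuous hu1.continuous
    have : A ≤ ∫⁻ X in Metric.ball (0 : EE n m) R, ENNReal.ofReal M ^ q ∂(wm n m (β * q)) := by
      rw [hA, ← lintegral_indicator Metric.isOpen_ball.measurableSet]
      refine lintegral_mono fun X => ?_
      by_cases hX : X ∈ Metric.ball (0 : EE n m) R
      · rw [Set.indicator_of_mem hX]
        rw [← ofReal_norm]
        exact ENNReal.rpow_le_rpow (ENNReal.ofReal_le_ofReal (hM X)) hq0.le
      · have h0 : u X = 0 := by
          by_contra h
          exact hX (hR (subset_tsupport _ h))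
        simp [h0, hq0]
    refine ne_top_of_le_ne_top ?_ this
    rw [setLIntegral_const]
    exact ENNReal.mul_ne_top (ENNReal.rpow_ne_top_of_nonneg hq0.le ENNReal.ofReal_ne_top)
      (wm_ball_lt_top n m hm _ hs R).ne
  have hv1 : ContDiff ℝ 1 (fun X => ‖u X‖ ^ σ) := hu1.norm_rpow hσ1
  have hv2 : HasCompactSupport (fun X => ‖u X‖ ^ σ) :=
    hc.comp_left (g := fun y : ℝ => ‖y‖ ^ σ) (by
      rw [norm_zero, Real.zero_rpow]; linarith)
  have hmain := hL _ hv1 hv2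
  have e3 : (∫⁻ X, ‖‖u X‖ ^ σ‖ₑ ^ (1 / d) ∂(wm n m (β * q))) = A := by
    rw [hA]
    refine lintegral_congr fun X => ?_
    rw [← ofReal_norm (‖u X‖ ^ σ), Real.norm_of_nonneg (by positivity),
      ← ENNReal.ofReal_rpow_of_nonneg (norm_nonneg _) (by linarith), ofReal_norm,
      ← ENNReal.rpow_mul, hσ, mul_assoc, mul_one_div_cancel hd0.ne', mul_one]
  rw [e3] at hmain
  have e4 : (∫⁻ Y, ENNReal.ofReal (hatNorm n m Y) ^ (α + β - β * q * d) *
      ‖fderiv ℝ (fun X => ‖u X‖ ^ σ) Y‖ₑ) ≤ ENNReal.ofReal σ * (D * A ^ (1 / p')) := by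
    calc _ ≤ ∫⁻ Y, ENNReal.ofReal σ * (((fun Y => H Y ^ α * ‖fderiv ℝ u Y‖ₑ) *
          (fun Y => H Y ^ (-(β * q) * (1 / p')) * ‖u Y‖ₑ ^ (q * (1 / p')))) Y) := by
          refine lintegral_mono_ae ?_
          filter_upwards [ae_hatNorm_pos n m hm] with Y hY
          have hexp : α + β - β * q * d = α + (-(β * q) * (1 / p')) := by
            rw [hip', hd]; field_simp; ring
          have hb : ‖fderiv ℝ (fun X => ‖u X‖ ^ σ) Y‖ₑ ≤
              ENNReal.ofReal σ * ‖u Y‖ₑ ^ (q * (1 / p')) * ‖fderiv ℝ u Y‖ₑ := by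
            have h := norm_fderiv_norm_rpow_le (hu1.differentiable one_ne_zero) (x := Y) hσ1
            rw [hσ'] at h
            rw [← ofReal_norm, ← ofReal_norm (u Y), ← ofReal_norm (fderiv ℝ u Y),
              ENNReal.ofReal_rpow_of_nonneg (norm_nonneg _) (by positivity),
              ← ENNReal.ofReal_mul (by linarith), ← ENNReal.ofReal_mul (by positivity)]
            exact ENNReal.ofReal_le_ofReal h
          rw [hexp, ENNReal.rpow_add _ _ (by simpa using hY) ENNReal.ofReal_ne_top]
          refine (mul_le_mul_right hb _).trans (le_of_eq ?_)
          simp only [Pi.mul_apply, hH]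
          ring
      _ = ENNReal.ofReal σ * ∫⁻ Y, (((fun Y => H Y ^ α * ‖fderiv ℝ u Y‖ₑ) *
          (fun Y => H Y ^ (-(β * q) * (1 / p')) * ‖u Y‖ₑ ^ (q * (1 / p')))) Y) :=
          lintegral_const_mul' _ _ ENNReal.ofReal_ne_top
      _ ≤ _ := by
          refine mul_le_mul_right ?_ _
          have := ENNReal.lintegral_mul_le_Lp_mul_Lq (volume : Measure (EE n m)) hconj
            (f := fun Y => H Y ^ α * ‖fderiv ℝ u Y‖ₑ)
            (g := fun Y => H Y ^ (-(β * q) * (1 / p')) * ‖u Y‖ₑ ^ (q * (1 / p')))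
            ((hHm.pow_const _).mul hfm.enorm).aemeasurable
            ((hHm.pow_const _).mul (hum.enorm.pow_const _)).aemeasurable
          rw [e1'] at this
          exact this
  have hfin : A ^ d ≤ ENNReal.ofReal (C * σ) * D * A ^ (1 / p') := by
    refine hmain.trans ((mul_le_mul_right e4 _).trans (le_of_eq ?_))
    rw [ENNReal.ofReal_mul hC.le]; ring
  rcases eq_or_ne A 0 with h0 | h0
  · rw [h0, ENNReal.zero_rpow_of_pos hiq]; exact zero_le
  have hdd : d = 1 / q + 1 / p' := by rw [hip', hd]; ring
  rw [hdd, ENNReal.rpow_add _ _ h0 hAfin] at hfin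
  have hx0 : A ^ (1 / p') ≠ 0 := by
    rw [Ne, ENNReal.rpow_eq_zero_iff]
    rintro (⟨h, _⟩ | ⟨h, _⟩)
    · exact h0 h
    · exact hAfin h
  have hxt : A ^ (1 / p') ≠ ∞ := ENNReal.rpow_ne_top_of_nonneg (by positivity) hAfin
  exact (ENNReal.mul_le_mul_iff_left hx0 hxt).1 hfin
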